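/- Let V ⊆ ℂⁿ be a connected open set, r ≥ 1, and let b^{jγ}_{kδ} be analytic functions on V, indexed by j, k = 1,…,m, multi-indices γ with |γ| = r and multi-indices δ with |δ| ≤ r − 1. Then the ℂ-vector space of analytic maps τ : V → ℂ^m satisfying ∂^γ τ^j = ∑_{k=1}^m ∑_{|δ| ≤ r−1} b^{jγ}_{kδ}(y) ∂^δ τ^k on V, for all j = 1,…,m and all multi-indices γ with |γ| = r, has dimension at most m times the number of multi-indices δ in n variables with |δ| ≤ r − 1. -/

import Mathlib

/-!
Let `N = m · #{δ : |δ| < r}` and let `U y τ ∈ ℂᴺ` be the jet at `y ∈ V` of a solution `τ`, that is,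
the family of all its partial derivatives of order `< r`. If `U y τ = 0`, then by the equations the
partial derivatives of order `r` of `τ` vanish at `y` as well, and therefore so does the first
derivative of the jet of `τ` at `y`.

Choose `y₀ ∈ V` at which the rank of `U y` is maximal, and solutions whose jets at `y₀` form a basis
of the range of `U y₀`. Near `y₀` their jets remain a basis of the range of `U y`, so the jet of any
solution `τ` is a combination of them with coefficients `c y`. For fixed `y₁`, subtracting the
combination with the constant coefficients `c y₁` gives a solution whose jet vanishes at `y₁`
together with its first derivative; hence `c` has derivative zero at `y₁`. So `c` is locally
constant, and a solution whose jet vanishes at `y₀` vanishes near `y₀`, thus on `V` by the identity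
theorem. In other words `U y₀` is injective.
-/

/-- The partial derivative of `f : ℂⁿ → ℂ` in the `i`-th coordinate direction. -/
noncomputable def pdi {n : ℕ} (i : Fin n) (f : (Fin n → ℂ) → ℂ) : (Fin n → ℂ) → ℂ :=
  fun y => fderiv ℂ f y (Pi.single i 1)

/-- The iterated partial derivative `∂^α f` of `f : ℂⁿ → ℂ` associated with the
multi-index `α : Fin n → ℕ` (the `i`-th coordinate derivative taken `α i` times). -/
noncomputable def mpd {n : ℕ} (α : Fin n → ℕ) (f : (Fin n → ℂ) → ℂ) : (Fin n → ℂ) → ℂ :=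
  (List.finRange n).foldr (fun i g => (pdi i)^[α i] g) f

/-- The finite set of multi-indices in `n` variables of total degree `< d`. -/
def degLt (n d : ℕ) : Finset (Fin n → ℕ) :=
  (Finset.Iic (fun _ => d)).filter (fun δ => ∑ i, δ i < d)

open Set Filter Topology
open Module (finrank)
open TopologicalSpace (Opens)

/-! ### Families of linear maps of locally constant kernel -/

section LinearAlgebra

variable {K V W X : Type*} [DivisionRing K] [AddCommGroup V] [Module K V] [AddCommGroup W]
  [Module K W] [AddCommGroup X] [Module K X]

lemma exists_comp_eq_subtype_range (f : V →ₗ[K] W) :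
    ∃ σ : f.range →ₗ[K] V, f ∘ₗ σ = f.range.subtype := by
  obtain ⟨σ, hσ⟩ := f.rangeRestrict.exists_rightInverse_of_surjective f.range_rangeRestrict
  exact ⟨σ, LinearMap.ext fun x => congrArg Subtype.val (LinearMap.congr_fun hσ x)⟩

variable [FiniteDimensional K W]

lemma exists_mem_forall_finrank_range_le {α : Type*} {s : Set α} (hs : s.Nonempty)
    (U : α → V →ₗ[K] W) :
    ∃ a₀ ∈ s, ∀ a ∈ s, finrank K (U a).range ≤ finrank K (U a₀).range := by
  have hfin : ((fun a => finrank K (U a).range) '' s).Finite :=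
    (finite_Iic (finrank K W)).subset <| image_subset_iff.2 fun a _ =>
      Submodule.finrank_le (U a).range
  obtain ⟨a₀, ha₀, hmax⟩ := hfin.exists_maximalFor' _ s hs
  exact ⟨a₀, ha₀, fun a ha => (le_total _ _).elim id (hmax ha)⟩

lemma range_comp_eq_range_of_injective {f : V →ₗ[K] W} {g : X →ₗ[K] V}
    (hinj : Function.Injective (f ∘ₗ g)) (hrank : finrank K f.range ≤ finrank K X) :
    (f ∘ₗ g).range = f.range :=
  Submodule.eq_of_le_of_finrank_le (LinearMap.range_comp_le_range g f)
    (by rwa [LinearMap.finrank_range_of_inj hinj])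

end LinearAlgebra

section Calculus

variable {𝕜 E F G W : Type*} [NormedAddCommGroup F] [NormedAddCommGroup G]

lemma exists_eventually_norm_le_mul_norm_of_injective [NontriviallyNormedField 𝕜]
    [CompleteSpace 𝕜] [NormedSpace 𝕜 F] [NormedSpace 𝕜 G] [FiniteDimensional 𝕜 G]
    {Y : Type*} [TopologicalSpace Y] {y₀ : Y} {T : Y → G →ₗ[𝕜] F}
    (hT : ∀ x, ContinuousAt (fun y => T y x) y₀) (hinj : Function.Injective (T y₀)) :
    ∃ C : ℝ, ∀ᶠ y in 𝓝 y₀, ∀ x, ‖x‖ ≤ C * ‖T y x‖ := by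
  obtain ⟨K, hK, hanti⟩ := (T y₀).injective_iff_antilipschitz.1 hinj
  have hcont : ContinuousAt (fun y => (T y).toContinuousLinearMap) y₀ :=
    continuousAt_clm_apply.2 hT
  refine ⟨2 * K, ?_⟩
  filter_upwards [Metric.continuousAt_iff'.1 hcont (1 / (2 * K)) (by positivity)] with y hy x
  rw [dist_eq_norm] at hy
  have hclose : K * ‖T y x - T y₀ x‖ ≤ ‖x‖ / 2 :=
    calc K * ‖T y x - T y₀ x‖
        ≤ K * (1 / (2 * K) * ‖x‖) := by
          gcongr
          exact ContinuousLinearMap.le_of_opNorm_le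
            ((T y).toContinuousLinearMap - (T y₀).toContinuousLinearMap) hy.le x
      _ = ‖x‖ / 2 := by field_simp
  have hlower : ‖x‖ ≤ K * ‖T y₀ x‖ := ZeroHomClass.bound_of_antilipschitz _ hanti x
  have htri : K * ‖T y₀ x‖ ≤ K * (‖T y x‖ + ‖T y x - T y₀ x‖) := by
    gcongr
    exact norm_le_norm_add_norm_sub (T y x) (T y₀ x)
  linarith

variable [NormedAddCommGroup E] [AddCommGroup W]

lemma hasFDerivAt_zero_of_eventually_apply_eq [NontriviallyNormedField 𝕜] [NormedSpace 𝕜 E]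
    [NormedSpace 𝕜 F] [NormedSpace 𝕜 G] [Module 𝕜 W] {U : E → W →ₗ[𝕜] F} {y₁ : E}
    (hd : ∀ w, DifferentiableAt 𝕜 (fun y => U y w) y₁)
    (hker : ∀ w, U y₁ w = 0 → fderiv 𝕜 (fun y => U y w) y₁ = 0)
    {σ : G →ₗ[𝕜] W} {C : ℝ} (hC : ∀ᶠ y in 𝓝 y₁, ∀ x, ‖x‖ ≤ C * ‖U y (σ x)‖)
    {w : W} {c : E → G} (hc : ∀ᶠ y in 𝓝 y₁, U y (σ (c y)) = U y w) :
    HasFDerivAt c (0 : E →L[𝕜] G) y₁ := by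
  set v := w - σ (c y₁)
  have hv : U y₁ v = 0 := by simp [v, hc.self_of_nhds]
  have hderiv : HasFDerivAt (fun y => U y v) (0 : E →L[𝕜] F) y₁ := hker v hv ▸ (hd v).hasFDerivAt
  -- `c y - c y₁` is the coordinate vector of `U y v`, which vanishes to first order at `y₁`.
  have hbound : (fun y => c y - c y₁) =O[𝓝 y₁] fun y => U y v := by
    refine Asymptotics.IsBigO.of_bound C ?_
    filter_upwards [hC, hc] with y hCy hcy
    simpa [v, hcy] using hCy (c y - c y₁)
  rw [hasFDerivAt_iff_isLittleO] at hderiv ⊢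
  simpa using hbound.trans_isLittleO (by simpa [hv] using hderiv)

variable [RCLike 𝕜] [NormedSpace 𝕜 E] [NormedSpace 𝕜 F] [FiniteDimensional 𝕜 F] [Module 𝕜 W]
  {U : E → W →ₗ[𝕜] F} {V : Set E}

lemma eventually_ker_le_of_finrank_range_le (hV : IsOpen V)
    (hd : ∀ w, ∀ y ∈ V, DifferentiableAt 𝕜 (fun y => U y w) y)
    (hker : ∀ w, ∀ y ∈ V, U y w = 0 → fderiv 𝕜 (fun y => U y w) y = 0)
    {y₀ : E} (hy₀ : y₀ ∈ V) (hmax : ∀ y ∈ V, finrank 𝕜 (U y).range ≤ finrank 𝕜 (U y₀).range) :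
    ∀ᶠ y in 𝓝 y₀, (U y₀).ker ≤ (U y).ker := by
  obtain ⟨σ, hσ⟩ := exists_comp_eq_subtype_range (U y₀)
  obtain ⟨C, hC⟩ := exists_eventually_norm_le_mul_norm_of_injective
    (T := fun y => U y ∘ₗ σ) (fun x => (hd (σ x) y₀ hy₀).continuousAt)
    (by rw [hσ]; exact Subtype.val_injective)
  obtain ⟨ε, hε, hball⟩ := Metric.eventually_nhds_iff_ball.1 ((hV.eventually_mem hy₀).and hC)
  have hy₀ball := Metric.mem_ball_self (x := y₀) hε
  have hrange : ∀ w, ∀ y ∈ Metric.ball y₀ ε, ∃ x, U y (σ x) = U y w := by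
    intro w y hy
    obtain ⟨hyV, hCy⟩ := hball y hy
    have hinj : Function.Injective (U y ∘ₗ σ) := (injective_iff_map_eq_zero _).2 fun x hx =>
      norm_le_zero_iff.1 ((hCy x).trans_eq (by simp [hx]))
    exact LinearMap.mem_range.1 <|
      (range_comp_eq_range_of_injective hinj (hmax y hyV)).ge (LinearMap.mem_range_self _ w)
  filter_upwards [Metric.ball_mem_nhds y₀ hε] with y hy w hw
  choose! c hc using hrange w
  have hnear : ∀ z ∈ Metric.ball y₀ ε, HasFDerivAt c (0 : E →L[𝕜] _) z := fun z hz => by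
    have hzn := Metric.isOpen_ball.mem_nhds hz
    exact hasFDerivAt_zero_of_eventually_apply_eq (fun w => hd w z (hball z hz).1)
      (fun w => hker w z (hball z hz).1) (eventually_of_mem hzn fun y hy => (hball y hy).2)
      (eventually_of_mem hzn hc)
  let : NormedSpace ℝ E := .restrictScalars ℝ 𝕜 E
  have hconst : c y = c y₀ := Metric.isOpen_ball.is_const_of_fderiv_eq_zero
    (convex_ball y₀ ε).isPreconnected
    (fun z hz => (hnear z hz).differentiableAt.differentiableWithinAt)
    (fun z hz => (hnear z hz).fderiv) hy hy₀ball
  have hc₀ : c y₀ = 0 := norm_le_zero_iff.1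
    (((hball y₀ hy₀ball).2 _).trans_eq (by simp [hc y₀ hy₀ball, LinearMap.mem_ker.1 hw]))
  rw [LinearMap.mem_ker, ← hc y hy, hconst, hc₀, map_zero, map_zero]

lemma exists_mem_eventually_ker_le (hV : IsOpen V) (hne : V.Nonempty)
    (hd : ∀ w, ∀ y ∈ V, DifferentiableAt 𝕜 (fun y => U y w) y)
    (hker : ∀ w, ∀ y ∈ V, U y w = 0 → fderiv 𝕜 (fun y => U y w) y = 0) :
    ∃ y₀ ∈ V, ∀ᶠ y in 𝓝 y₀, (U y₀).ker ≤ (U y).ker :=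
  let ⟨y₀, hy₀, hmax⟩ := exists_mem_forall_finrank_range_le hne U
  ⟨y₀, hy₀, eventually_ker_le_of_finrank_range_le hV hd hker hy₀ hmax⟩

end Calculus

/-! ### Partial derivatives of analytic functions -/

section Pdi

variable {n : ℕ} {V : Set (Fin n → ℂ)} {f g : (Fin n → ℂ) → ℂ} {y : Fin n → ℂ}

lemma analyticOnNhd_pdi (i : Fin n) (hf : AnalyticOnNhd ℂ f V) : AnalyticOnNhd ℂ (pdi i f) V :=
  (ContinuousLinearMap.apply ℂ ℂ (Pi.single i 1 : Fin n → ℂ)).comp_analyticOnNhd hf.fderiv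

lemma eqOn_pdi (hV : IsOpen V) (i : Fin n) (h : EqOn f g V) : EqOn (pdi i f) (pdi i g) V :=
  fun y hy => by rw [pdi, pdi, (h.eventuallyEq_of_mem (hV.mem_nhds hy)).fderiv_eq]

lemma pdi_add (i : Fin n) (hf : DifferentiableAt ℂ f y) (hg : DifferentiableAt ℂ g y) :
    pdi i (f + g) y = pdi i f y + pdi i g y := by
  simp only [pdi, fderiv_add hf hg, add_apply]

lemma pdi_const_smul (i : Fin n) (c : ℂ) (hf : DifferentiableAt ℂ f y) :
    pdi i (c • f) y = c • pdi i f y := by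
  simp only [pdi, fderiv_const_smul hf, smul_apply]

lemma pdi_comm (i j : Fin n) (hf : AnalyticAt ℂ f y) :
    pdi i (pdi j f) y = pdi j (pdi i f) y := by
  have pdi_pdi (k l : Fin n) :
      pdi k (pdi l f) y = fderiv ℂ (fderiv ℂ f) y (Pi.single k 1) (Pi.single l 1) := by
    change fderiv ℂ (fun z => fderiv ℂ f z (Pi.single l 1)) y (Pi.single k 1) = _
    rw [fderiv_clm_apply hf.fderiv.differentiableAt (differentiableAt_const _)]
    simp
  rw [pdi_pdi, pdi_pdi]
  exact hf.contDiffAt.isSymmSndFDerivAt_of_omega _ _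

lemma fderiv_eq_zero_of_forall_pdi (h : ∀ i, pdi i f y = 0) : fderiv ℂ f y = 0 :=
  ContinuousLinearMap.coe_injective <| LinearMap.pi_ext' fun i => LinearMap.ext_ring (h i)

end Pdi

lemma mul_prod_map_pow {ι M : Type*} [DecidableEq ι] [Monoid M] {a : ι → M}
    {i : ι} (ha : ∀ j, Commute (a i) (a j)) (α : ι → ℕ) {l : List ι} (hl : l.Nodup)
    (hi : i ∈ l) :
    a i * (l.map fun j => a j ^ α j).prod =
      (l.map fun j => a j ^ (α + Pi.single i 1 : ι → ℕ) j).prod := by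
  induction l with
  | nil => simp at hi
  | cons j l ih =>
    obtain ⟨hjl, hl⟩ := List.nodup_cons.1 hl
    simp only [List.map_cons, List.prod_cons]
    obtain rfl | hil := List.mem_cons.1 hi
    · have htail :
          l.map (fun k => a k ^ (α + Pi.single i 1 : ι → ℕ) k) = l.map fun k => a k ^ α k :=
        List.map_congr_left fun k hk => by
          simp [Pi.single_eq_of_ne (ne_of_mem_of_not_mem hk hjl)]
      rw [htail, Pi.add_apply, Pi.single_eq_same, pow_succ', mul_assoc]
    · rw [← ih hl hil, ← mul_assoc, ((ha j).pow_right _).eq, mul_assoc, Pi.add_apply,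
        Pi.single_eq_of_ne (ne_of_mem_of_not_mem hil hjl).symm, add_zero]

/-- The space of analytic functions on `V`, encoded as functions on `ℂⁿ` that vanish off `V` so that
`pdi` and `mpd` apply to them. -/
def holomorphicFunctions {n : ℕ} (V : Opens (Fin n → ℂ)) : Submodule ℂ ((Fin n → ℂ) → ℂ) where
  carrier := {f | AnalyticOnNhd ℂ f V ∧ EqOn f 0 (V : Set (Fin n → ℂ))ᶜ}
  zero_mem' := ⟨analyticOnNhd_const, fun _ _ => rfl⟩
  add_mem' hf hg := ⟨hf.1.add hg.1, fun y hy => by simp [hf.2 hy, hg.2 hy]⟩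
  smul_mem' c f hf := ⟨hf.1.const_smul, fun y hy => by simp [hf.2 hy]⟩

local notation "𝒪" => holomorphicFunctions

namespace holomorphicFunctions

variable {n : ℕ} {V : Opens (Fin n → ℂ)}

lemma analyticOnNhd (f : 𝒪 V) : AnalyticOnNhd ℂ f.1 V := f.2.1

lemma differentiableAt (f : 𝒪 V) {y : Fin n → ℂ} (hy : y ∈ V) : DifferentiableAt ℂ f.1 y :=
  (analyticOnNhd f y hy).differentiableAt

lemma ext_on {f g : 𝒪 V} (h : EqOn f.1 g.1 V) : f = g := by
  ext y
  by_cases hy : y ∈ V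
  exacts [h hy, (f.2.2 hy).trans (g.2.2 hy).symm]

/-- The element of `𝒪 V` given by a function that is analytic on `V`; its values off `V` are
replaced by `0`. -/
noncomputable def ofAnalyticOnNhd (f : (Fin n → ℂ) → ℂ) (hf : AnalyticOnNhd ℂ f V) : 𝒪 V :=
  ⟨(V : Set (Fin n → ℂ)).indicator f, hf.congr V.isOpen (eqOn_indicator).symm,
    fun _ hy => indicator_of_notMem hy f⟩

lemma ofAnalyticOnNhd_eqOn {f : (Fin n → ℂ) → ℂ} (hf : AnalyticOnNhd ℂ f V) :
    EqOn (ofAnalyticOnNhd f hf).1 f V :=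
  eqOn_indicator

/-- The operator `∂ᵢ` on `𝒪 V`, agreeing with `pdi i` on `V`. -/
noncomputable def partialDeriv (i : Fin n) : Module.End ℂ (𝒪 V) where
  toFun f := ofAnalyticOnNhd (pdi i f.1) (analyticOnNhd_pdi i (analyticOnNhd f))
  map_add' f g := ext_on fun y hy => by
    simp [ofAnalyticOnNhd_eqOn _ hy, pdi_add i (differentiableAt f hy) (differentiableAt g hy)]
  map_smul' c f := ext_on fun y hy => by
    simp [ofAnalyticOnNhd_eqOn _ hy, pdi_const_smul i c (differentiableAt f hy)]

lemma partialDeriv_eqOn (i : Fin n) (f : 𝒪 V) : EqOn (partialDeriv i f).1 (pdi i f.1) V :=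
  ofAnalyticOnNhd_eqOn (analyticOnNhd_pdi i (analyticOnNhd f))

lemma commute_partialDeriv (i j : Fin n) :
    Commute (partialDeriv i : Module.End ℂ (𝒪 V)) (partialDeriv j) :=
  LinearMap.ext fun f => ext_on fun y hy => by
    have partialDeriv_mul (k l : Fin n) :
        ((partialDeriv k * partialDeriv l : Module.End ℂ (𝒪 V)) f).1 y = pdi k (pdi l f.1) y :=
      (partialDeriv_eqOn k _ hy).trans (eqOn_pdi V.isOpen k (partialDeriv_eqOn l f) hy)
    rw [partialDeriv_mul, partialDeriv_mul, pdi_comm i j (analyticOnNhd f y hy)]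

/-- The operator `∂^α` on `𝒪 V`, agreeing with `mpd α` on `V`. The factors are taken in the order in
which `mpd` composes them. -/
noncomputable def iteratedPartialDeriv (α : Fin n → ℕ) : Module.End ℂ (𝒪 V) :=
  ((List.finRange n).map fun i => partialDeriv i ^ α i).prod

@[simp] lemma iteratedPartialDeriv_zero : (iteratedPartialDeriv 0 : Module.End ℂ (𝒪 V)) = 1 := by
  simp [iteratedPartialDeriv]

lemma partialDeriv_mul_iteratedPartialDeriv (i : Fin n) (α : Fin n → ℕ) :
    (partialDeriv i * iteratedPartialDeriv α : Module.End ℂ (𝒪 V)) =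
      iteratedPartialDeriv (α + Pi.single i 1) :=
  mul_prod_map_pow (commute_partialDeriv i) α (List.nodup_finRange n) (List.mem_finRange i)

lemma pdi_iteratedPartialDeriv (i : Fin n) (α : Fin n → ℕ) (f : 𝒪 V) :
    EqOn (pdi i (iteratedPartialDeriv α f).1) (iteratedPartialDeriv (α + Pi.single i 1) f).1 V := by
  rw [← partialDeriv_mul_iteratedPartialDeriv]
  exact (partialDeriv_eqOn i _).symm

lemma iterate_pdi_eqOn (i : Fin n) (k : ℕ) {g : (Fin n → ℂ) → ℂ} {f : 𝒪 V} (h : EqOn g f.1 V) :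
    EqOn ((pdi i)^[k] g) ((partialDeriv i ^ k) f).1 V := by
  induction k with
  | zero => exact h
  | succ k ih =>
    rw [Function.iterate_succ_apply', pow_succ']
    exact (eqOn_pdi V.isOpen i ih).trans (partialDeriv_eqOn i _).symm

lemma mpd_eqOn (α : Fin n → ℕ) {g : (Fin n → ℂ) → ℂ} {f : 𝒪 V} (h : EqOn g f.1 V) :
    EqOn (mpd α g) (iteratedPartialDeriv α f).1 V := by
  unfold mpd iteratedPartialDeriv
  induction List.finRange n with
  | nil => exact h
  | cons i l ih =>
    rw [List.map_cons, List.prod_cons]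
    exact iterate_pdi_eqOn i (α i) ih

end holomorphicFunctions

/-! ### Solutions and their jets -/

section Solutions

open holomorphicFunctions

variable {n m r : ℕ} {V : Opens (Fin n → ℂ)}
  {b : Fin m → (Fin n → ℕ) → Fin m → (Fin n → ℕ) → (Fin n → ℂ) → ℂ} {τ : Fin m → 𝒪 V}
  {y : Fin n → ℂ}

lemma mem_degLt {d : ℕ} {δ : Fin n → ℕ} : δ ∈ degLt n d ↔ ∑ i, δ i < d := by
  simp only [degLt, Finset.mem_filter, Finset.mem_Iic, and_iff_right_iff_imp]
  exact fun h i => (Finset.single_le_sum (fun _ _ => Nat.zero_le _) (Finset.mem_univ i)).trans h.le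

/-- The space of tuples `τ` of analytic functions on `V` that solve there the system
`∂^γ τ^j = ∑ b^{jγ}_{kδ} ∂^δ τ^k`, `|γ| = r`. -/
def solutionSpace (V : Opens (Fin n → ℂ)) (r : ℕ)
    (b : Fin m → (Fin n → ℕ) → Fin m → (Fin n → ℕ) → (Fin n → ℂ) → ℂ) :
    Submodule ℂ (Fin m → 𝒪 V) where
  carrier := {τ | ∀ (j : Fin m) (γ : Fin n → ℕ), ∑ i, γ i = r → ∀ y ∈ V,
    (iteratedPartialDeriv γ (τ j)).1 y
      = ∑ k, ∑ δ ∈ degLt n r, b j γ k δ y * (iteratedPartialDeriv δ (τ k)).1 y}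
  zero_mem' j γ _ y _ := by simp
  add_mem' hσ hτ j γ hγ y hy := by
    simp [hσ j γ hγ y hy, hτ j γ hγ y hy, mul_add, Finset.sum_add_distrib]
  smul_mem' c τ hτ j γ hγ y hy := by
    simp [hτ j γ hγ y hy, Finset.mul_sum, mul_left_comm]

/-- The `(r-1)`-jet at `y`: all partial derivatives of order `< r` of all components. -/
noncomputable def jet (V : Opens (Fin n → ℂ)) (m r : ℕ) (y : Fin n → ℂ) :
    (Fin m → 𝒪 V) →ₗ[ℂ] (Fin m × degLt n r → ℂ) :=
  LinearMap.pi fun p =>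
    LinearMap.proj y ∘ₗ (𝒪 V).subtype ∘ₗ iteratedPartialDeriv p.2.1 ∘ₗ LinearMap.proj p.1

lemma differentiableAt_jet (τ : Fin m → 𝒪 V) (hy : y ∈ V) :
    DifferentiableAt ℂ (fun z => jet V m r z τ) y :=
  differentiableAt_pi.2 fun _ => differentiableAt _ hy

lemma iteratedPartialDeriv_eq_zero_of_jet_eq_zero (hτ : τ ∈ solutionSpace V r b)
    (hy : y ∈ V) (hjet : jet V m r y τ = 0) (j : Fin m) {γ : Fin n → ℕ} (hγ : ∑ i, γ i ≤ r) :
    (iteratedPartialDeriv γ (τ j)).1 y = 0 := by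
  have hlow (k : Fin m) (δ : Fin n → ℕ) (hδ : δ ∈ degLt n r) :
      (iteratedPartialDeriv δ (τ k)).1 y = 0 :=
    congrFun hjet (k, ⟨δ, hδ⟩)
  obtain hlt | heq := hγ.lt_or_eq
  · exact hlow j γ (mem_degLt.2 hlt)
  · rw [hτ j γ heq y hy]
    exact Finset.sum_eq_zero fun k _ => Finset.sum_eq_zero fun δ hδ => by rw [hlow k δ hδ, mul_zero]

lemma fderiv_jet_eq_zero (hτ : τ ∈ solutionSpace V r b)
    (hy : y ∈ V) (hjet : jet V m r y τ = 0) : fderiv ℂ (fun z => jet V m r z τ) y = 0 := by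
  change fderiv ℂ (fun z p => (iteratedPartialDeriv (Subtype.val (Prod.snd p)) (τ p.1)).1 z) y = 0
  rw [fderiv_pi fun p => differentiableAt _ hy]
  refine (ContinuousLinearMap.pi_eq_zero _).2 fun p => fderiv_eq_zero_of_forall_pdi fun i => ?_
  refine (pdi_iteratedPartialDeriv i _ _ hy).trans
    (iteratedPartialDeriv_eq_zero_of_jet_eq_zero hτ hy hjet p.1 ?_)
  simpa [Finset.sum_add_distrib] using mem_degLt.1 p.2.2

lemma eq_zero_of_eventually_jet_eq_zero (hV : IsPreconnected (V : Set (Fin n → ℂ)))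
    (hτ : τ ∈ solutionSpace V r b) (hy : y ∈ V) (hjet : ∀ᶠ z in 𝓝 y, jet V m r z τ = 0) :
    τ = 0 := by
  funext j
  refine ext_on <| (analyticOnNhd (τ j)).eqOn_zero_of_preconnected_of_eventuallyEq_zero hV hy ?_
  filter_upwards [V.isOpen.mem_nhds hy, hjet] with z hz hjetz
  simpa using iteratedPartialDeriv_eq_zero_of_jet_eq_zero hτ hz hjetz j (γ := 0) (by simp)

lemma exists_injective_jet (hV : IsConnected (V : Set (Fin n → ℂ)))
    (b : Fin m → (Fin n → ℕ) → Fin m → (Fin n → ℕ) → (Fin n → ℂ) → ℂ) :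
    ∃ y ∈ V, Function.Injective (jet V m r y ∘ₗ (solutionSpace V r b).subtype) := by
  obtain ⟨y, hy, hker⟩ := exists_mem_eventually_ker_le (W := solutionSpace V r b)
    (U := fun y => jet V m r y ∘ₗ (solutionSpace V r b).subtype) V.isOpen hV.nonempty
    (fun τ y hy => differentiableAt_jet τ.1 hy)
    (fun τ _ hy hjet => fderiv_jet_eq_zero τ.2 hy hjet)
  refine ⟨y, hy, (injective_iff_map_eq_zero _).2 fun τ hτ => Subtype.ext ?_⟩
  exact eq_zero_of_eventually_jet_eq_zero hV.isPreconnected τ.2 hy (hker.mono fun z hz => hz hτ)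

lemma rank_solutionSpace_le (hV : IsConnected (V : Set (Fin n → ℂ)))
    (b : Fin m → (Fin n → ℕ) → Fin m → (Fin n → ℕ) → (Fin n → ℂ) → ℂ) :
    Module.rank ℂ (solutionSpace V r b) ≤ ((m * (degLt n r).card : ℕ) : Cardinal) := by
  obtain ⟨y, -, hinj⟩ := exists_injective_jet (r := r) hV b
  simpa using LinearMap.rank_le_of_injective _ hinj

/-- The restriction to `V` of tuples of elements of `𝒪 V`, as a map into `V → ℂᵐ`. -/
noncomputable def restrictₗ (V : Opens (Fin n → ℂ)) (m : ℕ) :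
    (Fin m → 𝒪 V) →ₗ[ℂ] (V → Fin m → ℂ) :=
  LinearMap.pi fun y => LinearMap.pi fun j =>
    LinearMap.proj y.1 ∘ₗ (𝒪 V).subtype ∘ₗ LinearMap.proj j

end Solutions

open holomorphicFunctions in
theorem solved_system_dimension_bound_general
    (n m r : ℕ) (V : Set (Fin n → ℂ)) (hVopen : IsOpen V) (hVconn : IsConnected V)
    (b : Fin m → (Fin n → ℕ) → Fin m → (Fin n → ℕ) → (Fin n → ℂ) → ℂ) :
    Module.rank ℂ
      ↥(Submodule.span ℂ
        (V.restrict ''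
          {τ : (Fin n → ℂ) → Fin m → ℂ |
            (∀ j, AnalyticOnNhd ℂ (fun y => τ y j) V) ∧
            ∀ (j : Fin m) (γ : Fin n → ℕ), (∑ i, γ i) = r → ∀ y ∈ V,
              mpd γ (fun z => τ z j) y
                = ∑ k, ∑ δ ∈ degLt n r, b j γ k δ y * mpd δ (fun z => τ z k) y}))
      ≤ ((m * (degLt n r).card : ℕ) : Cardinal) := by
  lift V to Opens (Fin n → ℂ) using hVopen
  refine (Submodule.rank_mono (Submodule.span_le.2 ?_)).trans
    ((rank_map_le (restrictₗ V m) _).trans (rank_solutionSpace_le (V := V) hVconn b))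
  rintro _ ⟨τ, ⟨hτ, hsys⟩, rfl⟩
  let σ : Fin m → 𝒪 V := fun j => ofAnalyticOnNhd _ (hτ j)
  have hmpd (j : Fin m) (α : Fin n → ℕ) :
      EqOn (mpd α fun z => τ z j) (iteratedPartialDeriv α (σ j)).1 V :=
    mpd_eqOn α (ofAnalyticOnNhd_eqOn (hτ j)).symm
  have hσ : σ ∈ solutionSpace V r b := fun j γ hγ y hy => by
    simpa only [hmpd _ _ hy] using hsys j γ hγ y hy
  exact ⟨σ, hσ, funext fun y => funext fun j => ofAnalyticOnNhd_eqOn (hτ j) y.2⟩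

/-- Let `V ⊆ ℂⁿ` be a connected open set, `r ≥ 1`, and let `b^{jγ}_{kδ}` be
analytic functions on `V` (`j, k = 1,…,m`, `|γ| = r`, `|δ| ≤ r−1`).  Then the `ℂ`-vector
space of analytic maps `τ : V → ℂ^m` satisfying
`∂^γ τ^j = ∑_{k=1}^m ∑_{|δ| ≤ r−1} b^{jγ}_{kδ}(y) ∂^δ τ^k` on `V` for all `j` and all `γ`
with `|γ| = r` has dimension at most `m` times the number of multi-indices `δ` in `n`
variables with `|δ| ≤ r − 1`. -/
theorem solved_system_dimension_bound
    (n m r : ℕ) (hr : 1 ≤ r)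
    (V : Set (Fin n → ℂ)) (hVopen : IsOpen V) (hVconn : IsConnected V)
    (b : Fin m → (Fin n → ℕ) → Fin m → (Fin n → ℕ) → (Fin n → ℂ) → ℂ)
    (hb : ∀ j γ k δ, AnalyticOnNhd ℂ (b j γ k δ) V) :
    Module.rank ℂ
      ↥(Submodule.span ℂ
        (V.restrict ''
          {τ : (Fin n → ℂ) → Fin m → ℂ |
            (∀ j, AnalyticOnNhd ℂ (fun y => τ y j) V) ∧
            ∀ (j : Fin m) (γ : Fin n → ℕ), (∑ i, γ i) = r → ∀ y ∈ V,
              mpd γ (fun z => τ z j) y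
                = ∑ k, ∑ δ ∈ degLt n r, b j γ k δ y * mpd δ (fun z => τ z k) y}))
      ≤ ((m * (degLt n r).card : ℕ) : Cardinal) :=
  solved_system_dimension_bound_general n m r V hVopen hVconn b
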